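/- There exists a constant c ∈ (0, 1) such that for every sufficiently large integer n one can find positive integers d₁ < d₂, both dividing n!, satisfying (1 − 1/n^c) · √(n!) < d₁ < √(n!) < d₂ < (1 + 2/n^c) · √(n!); consequently, for all sufficiently large n, (1 − 1/n^c) · √(n!) < ρ₁(n!) < √(n!) < ρ₂(n!) < (1 + 2/n^c) · √(n!). -/

import Mathlib

open Finset Nat Filter

/-- `ρ₁ m`: the largest divisor of `m` not exceeding `√m`. -/
noncomputable def rho₁ (m : ℕ) : ℕ := sSup {d : ℕ | d ∣ m ∧ (d : ℝ) ≤ Real.sqrt m}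

/-- `ρ₂ m`: the smallest divisor of `m` at least `√m`. -/
noncomputable def rho₂ (m : ℕ) : ℕ := sInf {d : ℕ | d ∣ m ∧ Real.sqrt m ≤ (d : ℝ)}

theorem fact_not_sq (n a : ℕ) (hn : 2 ≤ n) : a * a ≠ n ! := by
  intro h
  obtain ⟨p, hp, h1, h2⟩ := Nat.exists_prime_lt_and_le_two_mul (n / 2) (by omega)
  have hpn : p ∣ n ! := (hp.dvd_factorial).2 (by omega)
  have hpa : p ∣ a := by
    rw [← h] at hpn
    rcases hp.dvd_mul.1 hpn with h | h <;> exact h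
  have h3 : p ^ 2 ∣ n ! := by
    rw [← h, pow_two]
    exact mul_dvd_mul hpa hpa
  have hp2 := hp.two_le
  have hlog : Nat.log p n < 2 := by
    apply Nat.log_lt_of_lt_pow (by omega)
    have : n < 2 * p := by omega
    nlinarith
  rw [hp.pow_dvd_factorial_iff hlog] at h3
  simp at h3
  have := (Nat.le_div_iff_mul_le hp.pos).1 h3
  omega

theorem exists_split (n : ℕ) (hn : 8 ≤ n) :
    ∃ a b : ℕ, a * b = n ! ∧ a ≤ b ∧ b * (n - 1) ≤ a * n := by
  induction n using Nat.strong_induction_on with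
  | _ n ih =>
    by_cases h8 : n = 8
    · subst h8
      exact ⟨192, 210, by decide, by decide, by decide⟩
    by_cases h9 : n = 9
    · subst h9
      exact ⟨576, 630, by decide, by decide, by decide⟩
    obtain ⟨m, rfl⟩ : ∃ m, n = m + 3 := ⟨n - 3, by omega⟩
    obtain ⟨a, b, hab, hle, hb⟩ := ih (m + 1) (by omega) (by omega)
    have hf : (m + 3) ! = (m + 3) * ((m + 2) * (a * b)) := by
      rw [hab, Nat.factorial_succ, Nat.factorial_succ]
    simp only [Nat.add_sub_cancel] at hb
    have e : m + 3 - 1 = m + 2 := rfl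
    rw [e]
    rcases le_total (a * (m + 3)) (b * (m + 2)) with h | h
    · refine ⟨a * (m + 3), b * (m + 2), by rw [hf]; ring, h, ?_⟩
      have hm : 0 < m := by omega
      refine Nat.le_of_mul_le_mul_left ?_ hm
      calc m * (b * (m + 2) * (m + 2)) = (b * m) * ((m + 2) * (m + 2)) := by ring
        _ ≤ (a * (m + 1)) * ((m + 2) * (m + 2)) := Nat.mul_le_mul_right _ hb
        _ = a * ((m + 1) * ((m + 2) * (m + 2))) := by ring
        _ ≤ a * (m * ((m + 3) * (m + 3))) := by
          apply Nat.mul_le_mul_left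
          have : 7 ≤ m := by omega
          nlinarith
        _ = m * (a * (m + 3) * (m + 3)) := by ring
    · refine ⟨b * (m + 2), a * (m + 3), by rw [hf]; ring, h, ?_⟩
      calc a * (m + 3) * (m + 2) ≤ b * (m + 3) * (m + 2) := by gcongr
        _ = b * (m + 2) * (m + 3) := by ring

theorem middle_divisors_factorial :
    ∃ c : ℝ, 0 < c ∧ c < 1 ∧ ∃ N : ℕ, ∀ n : ℕ, N ≤ n →
      (∃ d₁ d₂ : ℕ, 0 < d₁ ∧ d₁ < d₂ ∧ d₁ ∣ n ! ∧ d₂ ∣ n ! ∧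
        (1 - 1 / (n : ℝ) ^ c) * Real.sqrt (n !) < (d₁ : ℝ) ∧
        (d₁ : ℝ) < Real.sqrt (n !) ∧ Real.sqrt (n !) < (d₂ : ℝ) ∧
        (d₂ : ℝ) < (1 + 2 / (n : ℝ) ^ c) * Real.sqrt (n !)) ∧
      ((1 - 1 / (n : ℝ) ^ c) * Real.sqrt (n !) < (rho₁ (n !) : ℝ) ∧
        (rho₁ (n !) : ℝ) < Real.sqrt (n !) ∧ Real.sqrt (n !) < (rho₂ (n !) : ℝ) ∧
        (rho₂ (n !) : ℝ) < (1 + 2 / (n : ℝ) ^ c) * Real.sqrt (n !)) := by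
  refine ⟨1 / 2, by norm_num, by norm_num, 8, fun n hn => ?_⟩
  obtain ⟨a, b, hab, hle, hb⟩ := exists_split n hn
  have hfpos : 0 < n ! := Nat.factorial_pos n
  have ha0 : 0 < a := Nat.pos_of_ne_zero (by rintro rfl; simp at hab; omega)
  rw [← Real.sqrt_eq_rpow]
  have hnsq : ∀ d : ℕ, (d : ℝ) ≠ Real.sqrt (n !) := by
    intro d hd
    apply fact_not_sq n d (by omega)
    have h := Real.mul_self_sqrt (Nat.cast_nonneg (α := ℝ) (n !))
    rw [← hd] at h
    exact_mod_cast h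
  have hne : a ≠ b := fun h => fact_not_sq n a (by omega) (by rw [← hab, ← h])
  have hlt : a < b := lt_of_le_of_ne hle hne
  have habR : (a : ℝ) * b = (n ! : ℝ) := by exact_mod_cast hab
  have hS2 := Real.mul_self_sqrt (Nat.cast_nonneg (α := ℝ) (n !))
  have hSpos : 0 < Real.sqrt (n !) := Real.sqrt_pos.2 (by exact_mod_cast hfpos)
  have hT2 := Real.mul_self_sqrt (Nat.cast_nonneg (α := ℝ) n)
  have hn8 : (8 : ℝ) ≤ n := by exact_mod_cast hn
  have hTpos : 0 < Real.sqrt (n : ℝ) := Real.sqrt_pos.2 (by linarith)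
  have hbR : (b : ℝ) * (n - 1) ≤ a * n := by
    have : ((n - 1 : ℕ) : ℝ) = n - 1 := by rw [Nat.cast_sub (by omega)]; simp
    rw [← this]
    exact_mod_cast hb
  have haR : (0 : ℝ) < a := by exact_mod_cast ha0
  have hltR : (a : ℝ) < b := by exact_mod_cast hlt
  generalize hS : Real.sqrt (n ! : ℝ) = S at *
  generalize hT : Real.sqrt (n : ℝ) = T at *
  have hT1 : 2 < T := by nlinarith
  rw [← habR] at hS2
  have h2 : (a : ℝ) < S := by nlinarith
  have h3 : S < b := by nlinarith
  have hST : S * S * (T * T - 1) ≤ a * a * (T * T) := by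
    rw [hS2, hT2]; nlinarith
  have hbT : (b : ℝ) * b * (T * T - 1) ≤ S * S * (T * T) := by
    rw [hS2, hT2]; nlinarith
  have h1 : (1 - 1 / T) * S < a := by
    have e : (1 - 1 / T) * S = (T - 1) * S / T := by field_simp
    rw [e, div_lt_iff₀ hTpos]
    apply lt_of_mul_self_lt_mul_self₀ (by positivity)
    nlinarith [mul_pos (mul_pos hSpos hSpos) (sub_pos.2 hT1)]
  have h4 : b < (1 + 2 / T) * S := by
    have e : (1 + 2 / T) * S = (T + 2) * S / T := by field_simp
    rw [e, lt_div_iff₀ hTpos]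
    apply lt_of_mul_self_lt_mul_self₀ (by positivity)
    have hpos : 0 < T * T - 1 := by nlinarith
    refine lt_of_mul_lt_mul_right ?_ hpos.le
    have k1 : (b : ℝ) * T * (b * T) * (T * T - 1) ≤ S * S * (T * T * (T * T)) := by
      nlinarith [mul_le_mul_of_nonneg_right hbT (mul_pos hTpos hTpos).le]
    have k2 : T * T * (T * T) < (T + 2) * (T + 2) * (T * T - 1) := by
      nlinarith [mul_pos hTpos hTpos]
    nlinarith [mul_lt_mul_of_pos_left k2 (mul_pos hSpos hSpos)]
  have da : a ∣ n ! := ⟨b, hab.symm⟩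
  have db : b ∣ n ! := ⟨a, by rw [← hab, mul_comm]⟩
  have bdd : BddAbove {d : ℕ | d ∣ n ! ∧ (d : ℝ) ≤ Real.sqrt (n ! : ℕ)} :=
    ⟨n !, fun d hd => Nat.le_of_dvd hfpos hd.1⟩
  have ma : a ∈ {d : ℕ | d ∣ n ! ∧ (d : ℝ) ≤ Real.sqrt (n ! : ℕ)} :=
    ⟨da, by rw [hS]; exact h2.le⟩
  have mb : b ∈ {d : ℕ | d ∣ n ! ∧ Real.sqrt (n ! : ℕ) ≤ (d : ℝ)} :=
    ⟨db, by rw [hS]; exact h3.le⟩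
  have r1 : (rho₁ (n !) : ℝ) ≤ Real.sqrt (n ! : ℕ) := (Nat.sSup_mem ⟨a, ma⟩ bdd).2
  have r1' : (a : ℝ) ≤ rho₁ (n !) := by exact_mod_cast le_csSup bdd ma
  have r2 : Real.sqrt (n ! : ℕ) ≤ (rho₂ (n !) : ℝ) := (Nat.sInf_mem ⟨b, mb⟩).2
  have r2' : (rho₂ (n !) : ℝ) ≤ b := by exact_mod_cast Nat.sInf_le mb
  rw [hS] at r1 r2
  exact ⟨⟨a, b, ha0, hlt, da, db, h1, h2, h3, h4⟩, h1.trans_le r1',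
    lt_of_le_of_ne r1 (hnsq _), lt_of_le_of_ne r2 (hnsq _).symm, r2'.trans_lt h4⟩
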